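/- Let G be a group, H a finite index normal subgroup of G, and K a normal subgroup of G. Let g be an element of H and suppose g has a minimal root a in G with respect to K. Let ψ: G → G/H be the quotient map. Then ν(g;H,K∩H) ≥ ν(g;G,K)/o(ψ(a), G/H), where o(ψ(a), G/H) is the order of aH in G/H. -/

import Mathlib

/-!
Let `d` be the order of `aH` in `G ⧸ H`, which is positive because `H` has finite index, and put
`h = a ^ d ∈ H`. Every exponent `n` with `a ^ n = g ∈ H` is a multiple `d * k`, so `g = h ^ k` and
`h` is a root of `g` inside `H`. It therefore bounds `ν(g; H, K ∩ H)` from below.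
If `g ∉ K`, this bound is `|k| = ν(g; G, K) / d`. If `g ∈ K`, it is the order `e` of `h` modulo
`K ∩ H`, and `a ^ (d * e) ∈ K` gives `ν(g; G, K) = o(aK) ≤ d * e`.
-/

open scoped Classical ENNReal

namespace ResDef

variable {G : Type*} [Group G]

/-- The order of the image of `x` in `G ⧸ H`: the least positive `j` with `x ^ j ∈ H`,
or `0` if there is no such `j`. -/
noncomputable def orderIn (H : Subgroup G) (x : G) : ℕ :=
  sInf {j : ℕ | 0 < j ∧ x ^ j ∈ H}

/-- The finite residual: the intersection of all finite index subgroups. -/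
def finiteResidual (G : Type*) [Group G] : Subgroup G :=
  ⨅ (H : Subgroup G) (_ : H.index ≠ 0), H

/-- An element of a free group is not a proper power. -/
def NotProperPower {α : Type*} (u : FreeGroup α) : Prop :=
  ∀ (v : FreeGroup α) (k : ℕ), u = v ^ k → k = 1

/-- `G` admits a finite presentation. -/
def FinitelyPresentedGroup (G : Type*) [Group G] : Prop :=
  ∃ (n : ℕ) (R : Finset (FreeGroup (Fin n))) (φ : FreeGroup (Fin n) →* G),
    Function.Surjective φ ∧ φ.ker = Subgroup.normalClosure (R : Set (FreeGroup (Fin n)))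

/-- The deficiency of a finitely presented group. -/
noncomputable def deficiency (G : Type*) [Group G] : ℝ :=
  sSup {x : ℝ | ∃ (n : ℕ) (R : Finset (FreeGroup (Fin n))) (φ : FreeGroup (Fin n) →* G),
    Function.Surjective φ ∧ φ.ker = Subgroup.normalClosure (R : Set (FreeGroup (Fin n))) ∧
    x = (n : ℝ) - (R.card : ℝ)}

/-- The residual deficiency of a finitely presented group. -/
noncomputable def rdef (G : Type*) [Group G] : ℝ :=
  sSup {x : ℝ | ∃ (n s : ℕ) (u : Fin s → FreeGroup (Fin n)) (m : Fin s → ℕ)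
    (φ : FreeGroup (Fin n) →* G),
    (∀ i, 1 ≤ m i) ∧ (∀ i, NotProperPower (u i)) ∧ Function.Surjective φ ∧
    φ.ker = Subgroup.normalClosure (Set.range fun i => u i ^ m i) ∧
    x = (n : ℝ) - ∑ i, ((orderIn (finiteResidual G) (φ (u i)) : ℝ))⁻¹}

/-- The deficiency gradient. -/
noncomputable def DG (G : Type*) [Group G] : ℝ :=
  sSup {x : ℝ | ∃ H : Subgroup G, H.index ≠ 0 ∧
    x = (deficiency H - 1) / (H.index : ℝ)}

/-- `ν_p(r)`: the largest `k` such that `r = s ^ (p ^ k)` for some `s`. -/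
noncomputable def nuP (p : ℕ) {α : Type*} (r : FreeGroup α) : ℕ :=
  sSup {k : ℕ | ∃ s : FreeGroup α, r = s ^ (p ^ k)}

/-- The `p`-deficiency of a group. -/
noncomputable def defP (p : ℕ) (G : Type*) [Group G] : ℝ :=
  sSup {x : ℝ | ∃ (n : ℕ) (R : Set (FreeGroup (Fin n))) (φ : FreeGroup (Fin n) →* G),
    Function.Surjective φ ∧ φ.ker = Subgroup.normalClosure R ∧
    Summable (fun r : R => ((p : ℝ) ^ (nuP p r.1))⁻¹) ∧
    x = (n : ℝ) - ∑' r : R, ((p : ℝ) ^ (nuP p r.1))⁻¹}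

/-- The `p`-deficiency gradient. -/
noncomputable def DGp (p : ℕ) (G : Type*) [Group G] : ℝ :=
  sSup {x : ℝ | ∃ H : Subgroup G, H.Normal ∧ H.index ≠ 0 ∧
    x = (defP p H - 1) / (H.index : ℝ)}

/-- The rank (minimal number of generators) of a group. -/
noncomputable def grpRank (G : Type*) [Group G] : ℕ :=
  sInf {n : ℕ | ∃ S : Finset G, S.card = n ∧ Subgroup.closure (S : Set G) = ⊤}

/-- The rank gradient. -/
noncomputable def RG (G : Type*) [Group G] : ℝ :=
  sInf {x : ℝ | ∃ H : Subgroup G, H.index ≠ 0 ∧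
    x = ((grpRank H : ℝ) - 1) / (H.index : ℝ)}

/-- The `p`-rank: the largest `n` such that `G` surjects onto `(C_p)^n`. -/
noncomputable def pRank (p : ℕ) (G : Type*) [Group G] : ℕ :=
  sSup {n : ℕ | ∃ f : G →* (Fin n → Multiplicative (ZMod p)), Function.Surjective f}

/-- The `p`-rank gradient. -/
noncomputable def RGp (p : ℕ) (G : Type*) [Group G] : ℝ :=
  sInf {x : ℝ | ∃ H : Subgroup G, H.Normal ∧ H.index ≠ 0 ∧
    x = ((pRank p H : ℝ) - 1) / (H.index : ℝ)}

/-- `G` is large: some finite index subgroup surjects onto a free group of rank 2. -/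
def Large (G : Type*) [Group G] : Prop :=
  ∃ H : Subgroup G, H.index ≠ 0 ∧ ∃ f : H →* FreeGroup (Fin 2), Function.Surjective f

/-- The first Betti number: the largest `n` such that `G` surjects onto `ℤ^n`. -/
noncomputable def firstBetti (G : Type*) [Group G] : ℕ :=
  sSup {n : ℕ | ∃ f : G →* Multiplicative (Fin n → ℤ), Function.Surjective f}

/-- The order of the image of `x` in `G ⧸ H`, as an extended natural number. -/
noncomputable def orderInE (H : Subgroup G) (x : G) : ℕ∞ :=
  if orderIn H x = 0 then ⊤ else (orderIn H x : ℕ∞)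

/-- `ν(g; G, K)` from the paper, valued in `ℕ∞`. -/
noncomputable def nu (K : Subgroup G) (g : G) : ℕ∞ :=
  if g ∈ K then
    sSup ((fun a : G => orderInE K a) '' {a : G | ∃ n : ℤ, a ^ n = g})
  else
    sSup ((fun q : G × ℤ => (q.2.natAbs : ℕ∞)) '' {q : G × ℤ | q.2 ≠ 0 ∧ q.1 ^ q.2 = g})

/-- The relative size `ν(g;G,K)⁻¹` of an element (`0` if `ν` is infinite). -/
noncomputable def relsizeElem (K : Subgroup G) (g : G) : ℝ :=
  (((nu K g).toNat : ℝ))⁻¹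

/-- The relative size of a finite set. -/
noncomputable def relsizeFinset (K : Subgroup G) (S : Finset G) : ℝ :=
  ∑ g ∈ S, relsizeElem K g

/-- The relative size of a normal subgroup `M`, finitely generated as a normal subgroup. -/
noncomputable def relsizeSubgroup (K M : Subgroup G) : ℝ :=
  sInf {x : ℝ | ∃ S : Finset G, Subgroup.normalClosure (S : Set G) = M ∧
    x = relsizeFinset K S}

/-- `a` is a minimal root of `g` in `G` with respect to `K`. -/
def IsMinimalRoot (K : Subgroup G) (g a : G) : Prop :=
  (g ∈ K ∧ (∃ n : ℤ, a ^ n = g) ∧ ((orderIn K a : ℕ∞) = nu K g)) ∨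
  (g ∉ K ∧ ∃ m : ℕ, (m : ℕ∞) = nu K g ∧ a ^ m = g)


theorem orderIn_le {K : Subgroup G} {x : G} {j : ℕ} (hj : 0 < j) (h : x ^ j ∈ K) :
    orderIn K x ≤ j :=
  Nat.sInf_le ⟨hj, h⟩

theorem pow_orderIn_mem (K : Subgroup G) (x : G) : x ^ orderIn K x ∈ K := by
  rcases Set.eq_empty_or_nonempty {j : ℕ | 0 < j ∧ x ^ j ∈ K} with h | h
  · simp [orderIn, h]
  · exact (Nat.sInf_mem h).2

theorem orderIn_pos {H : Subgroup G} (hHn : H.Normal) (hH : H.index ≠ 0) (x : G) :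
    0 < orderIn H x :=
  (Nat.sInf_mem (s := {j : ℕ | 0 < j ∧ x ^ j ∈ H})
    ⟨H.index, Nat.pos_of_ne_zero hH, H.pow_index_mem x⟩).1

theorem orderIn_dvd {H : Subgroup G} {x : G} (hpos : 0 < orderIn H x) {n : ℤ}
    (hn : x ^ n ∈ H) : (orderIn H x : ℤ) ∣ n := by
  have hd : (0 : ℤ) < orderIn H x := by exact_mod_cast hpos
  have hmem : x ^ (n % (orderIn H x : ℤ)) ∈ H := by
    rw [Int.emod_def, zpow_sub, zpow_mul, zpow_natCast]
    exact H.mul_mem hn (H.inv_mem (H.zpow_mem (pow_orderIn_mem H x) _))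
  obtain ⟨r, hr⟩ := Int.eq_ofNat_of_zero_le (Int.emod_nonneg n hd.ne')
  have hlt := Int.emod_lt_of_pos n hd
  rw [hr] at hmem hlt
  rw [zpow_natCast] at hmem
  refine Int.dvd_of_emod_eq_zero ?_
  by_contra hne
  have hle := orderIn_le (j := r) (by omega) hmem
  omega

/-- The estimate in `ℕ∞`, in multiplicative form. -/
theorem nu_le_orderIn_mul_nu (H : Subgroup G) (hHn : H.Normal) (hH : H.index ≠ 0)
    (K : Subgroup G) (g : G) (hg : g ∈ H) (a : G) (ha : IsMinimalRoot K g a) :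
    nu K g ≤ (orderIn H a : ℕ∞) * nu (K.subgroupOf H) (⟨g, hg⟩ : H) := by
  have hd := orderIn_pos hHn hH a
  have hroot : ∀ n : ℤ, a ^ n = g → ∃ k : ℤ, n = orderIn H a * k ∧
      (⟨a ^ orderIn H a, pow_orderIn_mem H a⟩ : H) ^ k = ⟨g, hg⟩ := by
    intro n hn
    obtain ⟨k, hk⟩ := orderIn_dvd hd (n := n) (by rw [hn]; exact hg)
    refine ⟨k, hk, Subtype.ext ?_⟩
    change (a ^ orderIn H a) ^ k = g
    rw [← hn, hk, zpow_mul, zpow_natCast]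
  rcases ha with ⟨hgK, ⟨n, hn⟩, ho⟩ | ⟨hgK, m, hm, ham⟩
  · obtain ⟨k, -, hk⟩ := hroot n hn
    have hle : orderInE (K.subgroupOf H) (⟨a ^ orderIn H a, pow_orderIn_mem H a⟩ : H) ≤
        nu (K.subgroupOf H) (⟨g, hg⟩ : H) := by
      rw [nu, if_pos (by simpa [Subgroup.mem_subgroupOf] using hgK)]
      exact le_sSup ⟨_, ⟨k, hk⟩, rfl⟩
    refine le_trans ?_ (mul_le_mul_right hle _)
    rw [← ho, orderInE]
    split_ifs with he
    · rw [ENat.mul_top (by exact_mod_cast hd.ne')]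
      exact le_top
    · have hmem := pow_orderIn_mem (K.subgroupOf H)
        (⟨a ^ orderIn H a, pow_orderIn_mem H a⟩ : H)
      rw [Subgroup.mem_subgroupOf, Subgroup.coe_pow, ← pow_mul] at hmem
      exact_mod_cast orderIn_le (Nat.mul_pos hd (Nat.pos_of_ne_zero he)) hmem
  · obtain ⟨k, hmk, hk⟩ := hroot m (by rw [zpow_natCast, ham])
    have hk0 : k ≠ 0 := by
      rintro rfl
      have hm0 : m = 0 := by simpa using hmk
      rw [hm0, pow_zero] at ham
      exact hgK (ham ▸ K.one_mem)
    have hle : (k.natAbs : ℕ∞) ≤ nu (K.subgroupOf H) (⟨g, hg⟩ : H) := by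
      rw [nu, if_neg (by simpa [Subgroup.mem_subgroupOf] using hgK)]
      exact le_sSup ⟨(_, k), ⟨hk0, hk⟩, rfl⟩
    refine le_trans ?_ (mul_le_mul_right hle _)
    have hnat : m = orderIn H a * k.natAbs := by
      have := congrArg Int.natAbs hmk
      simpa [Int.natAbs_mul] using this
    rw [← hm]
    exact_mod_cast hnat.le

/-- if `g ∈ H` has a minimal root `a` in `G` with respect to `K`, then
`ν(g;H,K∩H) ≥ ν(g;G,K)/o(ψ(a),G/H)`. -/
theorem statement12 {G : Type*} [Group G] (H : Subgroup G) (hHn : H.Normal)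
    (hH : H.index ≠ 0) (K : Subgroup G) (hKn : K.Normal) (g : G) (hg : g ∈ H)
    (a : G) (ha : IsMinimalRoot K g a) :
    (nu K g).toENNReal / ((orderIn H a : ℝ≥0∞))
      ≤ (nu (K.subgroupOf H) (⟨g, hg⟩ : H)).toENNReal := by
  refine ENNReal.div_le_of_le_mul' ?_
  have h := ENat.toENNReal_le.2 (nu_le_orderIn_mul_nu H hHn hH K g hg a ha)
  rwa [ENat.toENNReal_mul, ENat.toENNReal_coe] at h

end ResDef
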